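/- The number of pop-stacked permutations of length n for n = 1, 2, ..., 10 is 1, 1, 3, 11, 49, 263, 1653, 11877, 95991, 862047, respectively. -/

import Mathlib

/-- The maximal descending runs of a list, in order. -/
def descRuns : List ℕ → List (List ℕ)
  | [] => []
  | a :: l =>
    match descRuns l with
    | (b :: r) :: rs => if b < a then (a :: b :: r) :: rs else [a] :: (b :: r) :: rs
    | _ => [[a]]

/-- The maximal ascending runs of a list, in order. -/
def ascRuns : List ℕ → List (List ℕ)
  | [] => []
  | a :: l =>
    match ascRuns l with
    | (b :: r) :: rs => if a < b then (a :: b :: r) :: rs else [a] :: (b :: r) :: rs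
    | _ => [[a]]

/-- The pop-stack operator: reverse each maximal descending run. -/
def popStack (l : List ℕ) : List ℕ := ((descRuns l).map List.reverse).flatten

/-- `l` is (the one-line notation of) a permutation of `[n] = {1,…,n}`. -/
def IsPermOf (n : ℕ) (l : List ℕ) : Prop := l.Perm (List.range' 1 n)

/-- Minimum of a list of naturals. -/
noncomputable def lmin (l : List ℕ) : ℕ := sInf {x | x ∈ l}

/-- Maximum of a list of naturals. -/
def lmax (l : List ℕ) : ℕ := l.foldr max 0

/-- Minimum of a finset of naturals. -/
noncomputable def bmin (B : Finset ℕ) : ℕ := sInf (B : Set ℕ)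

/-- Maximum of a finset of naturals. -/
def bmax (B : Finset ℕ) : ℕ := B.sup id

/-- A ballot (ordered set partition) with underlying set `U`. -/
def IsBallot (U : Finset ℕ) (l : List (Finset ℕ)) : Prop :=
  (∀ B ∈ l, B.Nonempty) ∧ l.Pairwise Disjoint ∧ l.foldr (· ∪ ·) ∅ = U

/-- A ballot is overlapping if adjacent blocks satisfy
`max Bᵢ > min Bᵢ₊₁` and `min Bᵢ < max Bᵢ₊₁`. -/
def Overlapping (l : List (Finset ℕ)) : Prop :=
  l.Chain' fun B C => bmin C < bmax B ∧ bmin B < bmax C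

/-- `σ` is pop-stacked: it is the image of some permutation of `[n]` under `popStack`. -/
def IsPopStacked (n : ℕ) (σ : List ℕ) : Prop :=
  ∃ π, IsPermOf n π ∧ popStack π = σ

/-- `f_{c,d}(n)`: overlapping ballots of `[n]` whose last block has min `c` and max `d`. -/
noncomputable def fcd (c d n : ℕ) : ℕ :=
  Nat.card {l : List (Finset ℕ) // IsBallot (Finset.Icc 1 n) l ∧ Overlapping l ∧
    ∃ B, l.getLast? = some B ∧ bmin B = c ∧ bmax B = d}

/-- `f_{c,d}(n,k)`: overlapping ballots of `[n]` with `k` blocks whose last block has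
min `c` and max `d`. -/
noncomputable def fcdk (c d n k : ℕ) : ℕ :=
  Nat.card {l : List (Finset ℕ) // IsBallot (Finset.Icc 1 n) l ∧ Overlapping l ∧
    l.length = k ∧ ∃ B, l.getLast? = some B ∧ bmin B = c ∧ bmax B = d}

/-- The number of pop-stacked permutations of `[n]`. -/
noncomputable def popCount (n : ℕ) : ℕ :=
  Nat.card {σ : List ℕ // IsPermOf n σ ∧ IsPopStacked n σ}

/-- The number of pop-stacked permutations of `[n]` with exactly `k` ascending runs. -/
noncomputable def popCountK (n k : ℕ) : ℕ :=
  Nat.card {σ : List ℕ // IsPermOf n σ ∧ IsPopStacked n σ ∧ (ascRuns σ).length = k}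

/-- Greedy sorting with a pop-stack whose contents increase from top to bottom:
push when possible, otherwise pop the whole stack. -/
def greedyPop : List ℕ → List ℕ → List ℕ
  | stack, [] => stack
  | [], a :: rest => greedyPop [a] rest
  | t :: s, a :: rest =>
    if a < t then greedyPop (a :: t :: s) rest
    else (t :: s) ++ greedyPop [a] rest

/-!
Reading off the descending runs of a permutation `π` as sets gives an ordered set partition whose
blocks, written in increasing order, spell out the image of `π` under the pop-stack; merging
neighbouring blocks `B`, `C` with `max B < min C` does not change this word and makes the partition
overlapping. Conversely an overlapping ballot can be recovered from its word as the list of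
ascending runs, and writing its blocks in decreasing order gives a preimage. So pop-stacked
permutations are counted by overlapping ballots.

To count these, build the ballot block by block. Whether `B` may follow `P` depends only on how many
of the numbers not yet used lie below `min P`, `max P`, `min B` and `max B`, and the number of
blocks `B` with prescribed such data is a multiset coefficient. This gives a recursion in three
numerical parameters, which is then evaluated.
-/

/-! ## Pop-stacked permutations and overlapping ballots -/

theorem bmin_mem {B : Finset ℕ} (hB : B.Nonempty) : bmin B ∈ B :=
  Nat.sInf_mem hB

theorem bmin_le {B : Finset ℕ} {x : ℕ} (hx : x ∈ B) : bmin B ≤ x :=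
  Nat.sInf_le hx

theorem le_bmax {B : Finset ℕ} {x : ℕ} (hx : x ∈ B) : x ≤ bmax B :=
  Finset.le_sup (f := id) hx

theorem bmax_mem {B : Finset ℕ} (hB : B.Nonempty) : bmax B ∈ B := by
  obtain ⟨x, hx, hmax⟩ := Finset.exists_mem_eq_sup B hB id
  rwa [bmax, hmax]

theorem bmin_eq_of_isLeast {B : Finset ℕ} {x : ℕ} (h : IsLeast (B : Set ℕ) x) : bmin B = x :=
  h.csInf_eq

theorem bmax_eq_of_isGreatest {B : Finset ℕ} {x : ℕ} (h : IsGreatest (B : Set ℕ) x) :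
    bmax B = x :=
  le_antisymm (Finset.sup_le h.2) (le_bmax h.1)

theorem bmin_singleton (x : ℕ) : bmin {x} = x :=
  bmin_eq_of_isLeast (by simp)

theorem bmax_singleton (x : ℕ) : bmax {x} = x :=
  Finset.sup_singleton

theorem bmin_insert_of_forall_lt {B : Finset ℕ} {x : ℕ} (hx : ∀ y ∈ B, y < x)
    (hB : B.Nonempty) : bmin (insert x B) = bmin B := by
  refine bmin_eq_of_isLeast ⟨Finset.mem_insert_of_mem (bmin_mem hB), fun y hy => ?_⟩
  rcases Finset.mem_insert.1 hy with rfl | hy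
  · exact (hx _ (bmin_mem hB)).le
  · exact bmin_le hy

theorem bmax_insert_of_forall_lt {B : Finset ℕ} {x : ℕ} (hx : ∀ y ∈ B, y < x) :
    bmax (insert x B) = x := by
  rw [bmax, Finset.sup_insert]
  exact sup_eq_left.2 (Finset.sup_le fun y hy => (hx y hy).le)

theorem bmin_pair {x y : ℕ} (h : x ≤ y) : bmin {x, y} = x :=
  bmin_eq_of_isLeast (by simp [IsLeast, lowerBounds, h])

theorem bmax_pair {x y : ℕ} (h : x ≤ y) : bmax {x, y} = y :=
  bmax_eq_of_isGreatest (by simp [IsGreatest, upperBounds, h])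

theorem nonempty_of_lt_bmax {B : Finset ℕ} {x : ℕ} (h : x < bmax B) : B.Nonempty := by
  rw [Finset.nonempty_iff_ne_empty]
  rintro rfl
  exact Nat.not_lt_zero x h

theorem mem_foldr_union {x : ℕ} {L : List (Finset ℕ)} :
    x ∈ L.foldr (· ∪ ·) ∅ ↔ ∃ B ∈ L, x ∈ B := by
  induction L <;> simp_all

theorem disjoint_foldr_union {B : Finset ℕ} {L : List (Finset ℕ)} :
    Disjoint B (L.foldr (· ∪ ·) ∅) ↔ ∀ C ∈ L, Disjoint B C := by
  induction L <;> simp_all [Finset.disjoint_union_right]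

theorem isBallot_nil {U : Finset ℕ} : IsBallot U [] ↔ U = ∅ := by
  simp [IsBallot, eq_comm]

theorem isBallot_cons {U B : Finset ℕ} {L : List (Finset ℕ)} :
    IsBallot U (B :: L) ↔ B.Nonempty ∧ B ⊆ U ∧ IsBallot (U \ B) L := by
  simp only [IsBallot, List.forall_mem_cons, List.pairwise_cons, List.foldr_cons]
  rw [← disjoint_foldr_union]
  constructor
  · rintro ⟨⟨hB, hL⟩, ⟨hdisj, hpair⟩, rfl⟩
    exact ⟨hB, Finset.subset_union_left, hL, hpair,
      (Finset.union_sdiff_cancel_left hdisj).symm⟩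
  · rintro ⟨hB, hBU, hL, hpair, hU⟩
    rw [hU]
    exact ⟨⟨hB, hL⟩, ⟨Finset.disjoint_sdiff, hpair⟩, Finset.union_sdiff_of_subset hBU⟩

theorem overlapping_cons_cons {B C : Finset ℕ} {L : List (Finset ℕ)} :
    Overlapping (B :: C :: L) ↔
      (bmin C < bmax B ∧ bmin B < bmax C) ∧ Overlapping (C :: L) :=
  List.isChain_cons_cons

theorem overlapping_singleton (B : Finset ℕ) : Overlapping [B] :=
  List.isChain_singleton B

theorem head_sort {B : Finset ℕ} (h : B.sort ≠ []) : B.sort.head h = bmin B :=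
  (bmin_eq_of_isLeast ⟨(Finset.mem_sort _).1 (List.head_mem h),
    fun _ hx => (Finset.pairwise_sort B _).rel_head ((Finset.mem_sort _).2 hx)⟩).symm

theorem getLast_sort {B : Finset ℕ} (h : B.sort ≠ []) : B.sort.getLast h = bmax B :=
  (bmax_eq_of_isGreatest ⟨(Finset.mem_sort _).1 (List.getLast_mem h),
    fun _ hx => (Finset.pairwise_sort B _).rel_getLast ((Finset.mem_sort _).2 hx)⟩).symm

theorem sort_ne_nil {B : Finset ℕ} (hB : B.Nonempty) : B.sort ≠ [] :=
  List.ne_nil_of_mem ((Finset.mem_sort _).2 (bmin_mem hB))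

theorem sort_union_of_bmax_lt_bmin {B C : Finset ℕ} (h : bmax B < bmin C) :
    (B ∪ C).sort = B.sort ++ C.sort := by
  have hlt {x y : ℕ} (hx : x ∈ B) (hy : y ∈ C) : x < y :=
    (le_bmax hx).trans_lt (h.trans_le (bmin_le hy))
  have hnodup : (B.sort ++ C.sort).Nodup :=
    (Finset.sort_nodup B _).append (Finset.sort_nodup C _) fun x hxB hxC =>
      (hlt ((Finset.mem_sort _).1 hxB) ((Finset.mem_sort _).1 hxC)).false
  rw [← (List.toFinset_sort (· ≤ ·) hnodup).2, List.toFinset_append, Finset.sort_toFinset,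
    Finset.sort_toFinset]
  refine List.pairwise_append.2 ⟨Finset.pairwise_sort B _, Finset.pairwise_sort C _, ?_⟩
  simp only [Finset.mem_sort]
  exact fun x hx y hy => (hlt hx hy).le

theorem descRuns_eq_splitBy (l : List ℕ) : descRuns l = l.splitBy fun a b => b < a := by
  symm
  induction l with
  | nil => rfl
  | cons a l ih =>
    obtain ⟨hflat, hnil, hchain, hruns⟩ := List.splitBy_eq_iff.1 ih
    rcases h : descRuns l with _ | ⟨_ | ⟨b, r⟩, rs⟩
    · have : l = [] := by simpa [h] using hflat
      subst this
      rfl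
    · simp [h] at hnil
    rw [h] at hflat hnil hchain hruns
    by_cases hba : b < a
    · simp only [descRuns, h, if_pos hba]
      have hrs : [] ∉ rs := fun h => hnil (List.mem_cons_of_mem _ h)
      rw [List.forall_mem_cons] at hchain
      refine List.splitBy_eq_iff.2 ⟨by simp [hflat], by simp [hrs], ?_, ?_⟩
      · exact List.forall_mem_cons.2 ⟨hchain.1.cons_cons (by simpa using hba), hchain.2⟩
      · cases rs <;> simp_all [List.isChain_cons_cons, List.getLast_cons]
    · simp only [descRuns, h, if_neg hba]
      refine List.splitBy_eq_iff.2 ⟨by simp [hflat], by simpa using hnil,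
        by simpa using hchain, ?_⟩
      exact List.isChain_cons_cons.2 ⟨by simp [hba], hruns⟩

theorem popStack_perm (l : List ℕ) : (popStack l).Perm l := by
  conv_rhs => rw [← List.flatten_splitBy (fun a b => b < a) l, ← descRuns_eq_splitBy]
  exact List.Perm.flatten_congr (List.forall₂_map_left_iff.2
    (List.forall₂_same.2 fun r _ => r.reverse_perm))

/-- The word obtained by writing each block of `L` in increasing order, the candidate
pop-stacked permutation of the ballot `L`. -/
def ballotWord (L : List (Finset ℕ)) : List ℕ := (L.map fun B => B.sort).flatten

theorem isBallot_Icc_iff {n : ℕ} {L : List (Finset ℕ)} :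
    IsBallot (Finset.Icc 1 n) L ↔ (∀ B ∈ L, B.Nonempty) ∧ IsPermOf n (ballotWord L) := by
  have hmem (x : ℕ) : x ∈ ballotWord L ↔ x ∈ L.foldr (· ∪ ·) ∅ := by
    simp [ballotWord, mem_foldr_union]
  have hnodup : (ballotWord L).Nodup ↔ L.Pairwise Disjoint := by
    simpa [ballotWord, List.nodup_flatten, List.pairwise_map, List.Disjoint] using
      List.Pairwise.iff fun _ _ => Finset.disjoint_left.symm
  refine and_congr_right fun _ => ⟨fun ⟨hdisj, hU⟩ => ?_, fun h => ?_⟩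
  · refine (List.perm_ext_iff_of_nodup (hnodup.2 hdisj) List.nodup_range').2 fun x => ?_
    rw [hmem, hU]
    grind
  · refine ⟨hnodup.1 (h.nodup_iff.2 List.nodup_range'), ?_⟩
    ext x
    rw [← hmem, h.mem_iff]
    grind

theorem ballotWord_cons (B : Finset ℕ) (L : List (Finset ℕ)) :
    ballotWord (B :: L) = B.sort ++ ballotWord L :=
  rfl

theorem IsBallot.merge {U B C : Finset ℕ} {L : List (Finset ℕ)} (h : IsBallot U (B :: C :: L)) :
    IsBallot U ((B ∪ C) :: L) := by
  simp only [isBallot_cons] at h ⊢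
  obtain ⟨hB, hBU, -, hCU, hL⟩ := h
  exact ⟨hB.mono Finset.subset_union_left,
    Finset.union_subset hBU (hCU.trans Finset.sdiff_subset),
    by rwa [← Finset.sup_eq_union, ← sdiff_sdiff_left]⟩

theorem Overlapping.cons_of_subset {B C : Finset ℕ} {L : List (Finset ℕ)}
    (h : Overlapping (B :: L)) (hB : B.Nonempty) (hBC : B ⊆ C) : Overlapping (C :: L) := by
  cases L with
  | nil => exact overlapping_singleton C
  | cons D L =>
    rw [overlapping_cons_cons] at h ⊢
    exact ⟨⟨h.1.1.trans_le (Finset.sup_mono hBC),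
      (bmin_le (hBC (bmin_mem hB))).trans_lt h.1.2⟩, h.2⟩

/-- Writing an increasing block right before a block of larger numbers or writing their union gives
the same word, so such pairs can be merged; the clause on `p` says that merging does not destroy the
chain condition with the preceding block. -/
theorem exists_overlapping_ballotWord_eq {U : Finset ℕ} {L : List (Finset ℕ)}
    (hL : IsBallot U L) (hchain : L.IsChain fun B C => bmin B ≤ bmax C) :
    ∃ M, IsBallot U M ∧ Overlapping M ∧ ballotWord M = ballotWord L ∧
      ∀ p, (∀ B ∈ L.head?, p ≤ bmax B) → ∀ B ∈ M.head?, p ≤ bmax B := by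
  induction L generalizing U with
  | nil => exact ⟨[], hL, List.isChain_nil, rfl, fun _ h => h⟩
  | cons B L ih =>
    obtain ⟨hB, hBU, hL⟩ := isBallot_cons.1 hL
    obtain ⟨hBL, hchain⟩ := List.isChain_cons.1 hchain
    obtain ⟨M, hM, hover, hword, hhead⟩ := ih hL hchain
    have hBM : IsBallot U (B :: M) := isBallot_cons.2 ⟨hB, hBU, hM⟩
    have hwordB : ballotWord (B :: M) = ballotWord (B :: L) := by simp only [ballotWord_cons, hword]
    cases M with
    | nil => exact ⟨[B], hBM, overlapping_singleton B, hwordB, fun _ h => h⟩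
    | cons C M =>
      have hC : C.Nonempty := (isBallot_cons.1 hM).1
      have hBC : Disjoint B C := (List.pairwise_cons.1 hBM.2.1).1 C List.mem_cons_self
      by_cases hlt : bmax B < bmin C
      · refine ⟨(B ∪ C) :: M, hBM.merge, hover.cons_of_subset hC Finset.subset_union_right,
          ?_, fun p hp => ?_⟩
        · rw [← hwordB, ballotWord_cons, sort_union_of_bmax_lt_bmin hlt, List.append_assoc]
          rfl
        · simp only [List.head?_cons, Option.mem_some_iff, forall_eq'] at hp ⊢
          exact hp.trans (Finset.sup_mono Finset.subset_union_left)
      · refine ⟨B :: C :: M, hBM, overlapping_cons_cons.2 ⟨⟨?_, ?_⟩, hover⟩, hwordB,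
          fun _ h => h⟩
        · exact (not_lt.1 hlt).lt_of_ne
            (Finset.disjoint_iff_ne.1 hBC _ (bmax_mem hB) _ (bmin_mem hC)).symm
        · exact (hhead _ hBL C rfl).lt_of_ne
            (Finset.disjoint_iff_ne.1 hBC _ (bmin_mem hB) _ (bmax_mem hC))

theorem IsPopStacked.exists_overlapping {n : ℕ} {σ : List ℕ} (hσ : IsPopStacked n σ) :
    ∃ L, IsBallot (Finset.Icc 1 n) L ∧ Overlapping L ∧ ballotWord L = σ := by
  obtain ⟨π, hπ, rfl⟩ := hσ
  have hruns : descRuns π = π.splitBy fun a b => b < a := descRuns_eq_splitBy π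
  have hsort (r : List ℕ) (hr : r ∈ descRuns π) : r.toFinset.sort = r.reverse := by
    rw [hruns] at hr
    have hgt : r.Pairwise (· > ·) := by
      simpa using (List.isChain_of_mem_splitBy hr).imp (S := (· > ·)) (by simp) |>.pairwise
    rw [← List.toFinset_reverse]
    exact (List.toFinset_sort _ (List.nodup_reverse.2 (hgt.imp ne_of_gt))).2
      (List.pairwise_reverse.2 (hgt.imp le_of_lt))
  have hword : ballotWord ((descRuns π).map List.toFinset) = popStack π := by
    rw [ballotWord, popStack, List.map_map]
    exact congrArg List.flatten (List.map_congr_left hsort)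
  have hballot : IsBallot (Finset.Icc 1 n) ((descRuns π).map List.toFinset) := by
    refine isBallot_Icc_iff.2 ⟨?_, hword ▸ (popStack_perm π).trans hπ⟩
    simp only [List.forall_mem_map, List.toFinset_nonempty_iff]
    rintro r hr rfl
    exact List.nil_notMem_splitBy _ _ (hruns ▸ hr)
  have hchain : ((descRuns π).map List.toFinset).IsChain fun B C => bmin B ≤ bmax C := by
    rw [List.isChain_map, hruns]
    refine (List.isChain_getLast_head_splitBy _ π).imp fun r s ⟨hr, hs, hrs⟩ => ?_
    calc bmin r.toFinset ≤ r.getLast hr := bmin_le (by simp)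
      _ ≤ s.head hs := by simpa using hrs
      _ ≤ bmax s.toFinset := le_bmax (by simp)
  obtain ⟨L, hL, hover, hL', -⟩ := exists_overlapping_ballotWord_eq hballot hchain
  exact ⟨L, hL, hover, hL'.trans hword⟩

theorem isPopStacked_ballotWord {n : ℕ} {L : List (Finset ℕ)}
    (hL : IsBallot (Finset.Icc 1 n) L) (hover : Overlapping L) :
    IsPopStacked n (ballotWord L) := by
  obtain ⟨hne, hperm⟩ := isBallot_Icc_iff.1 hL
  have hdesc : descRuns (L.map fun B => B.sort.reverse).flatten =
      L.map fun B => B.sort.reverse := by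
    rw [descRuns_eq_splitBy]
    refine List.splitBy_flatten ?_ ?_ ?_
    · simpa using fun B hB => sort_ne_nil (hne B hB)
    · intro r hr
      obtain ⟨B, -, rfl⟩ := List.mem_map.1 hr
      simpa [List.isChain_reverse] using (Finset.sortedLT_sort B).isChain
    · rw [List.isChain_map]
      refine hover.imp fun B C ⟨hCB, hBC⟩ => ?_
      have hB := sort_ne_nil (nonempty_of_lt_bmax hCB)
      have hC := sort_ne_nil (nonempty_of_lt_bmax hBC)
      refine ⟨by simpa using hB, by simpa using hC, ?_⟩
      simpa [head_sort, getLast_sort] using hBC.le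
  have hpop : popStack (L.map fun B => B.sort.reverse).flatten = ballotWord L := by
    rw [popStack, hdesc, List.map_map, ballotWord]
    simp only [Function.comp_def, List.reverse_reverse]
  exact ⟨_, (hpop ▸ popStack_perm _).symm.trans hperm, hpop⟩

theorem splitBy_ballotWord {L : List (Finset ℕ)} (hne : ∀ B ∈ L, B.Nonempty)
    (hover : Overlapping L) :
    (ballotWord L).splitBy (fun a b => a < b) = L.map fun B => B.sort := by
  rw [ballotWord]
  refine List.splitBy_flatten ?_ ?_ ?_
  · simpa using fun B hB => sort_ne_nil (hne B hB)
  · intro r hr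
    obtain ⟨B, -, rfl⟩ := List.mem_map.1 hr
    simpa using (Finset.sortedLT_sort B).isChain
  · rw [List.isChain_map]
    refine hover.imp fun B C ⟨hCB, hBC⟩ => ?_
    refine ⟨sort_ne_nil (nonempty_of_lt_bmax hCB), sort_ne_nil (nonempty_of_lt_bmax hBC), ?_⟩
    simpa [head_sort, getLast_sort] using hCB.le

theorem popCount_eq_ncard (n : ℕ) :
    popCount n = {L | IsBallot (Finset.Icc 1 n) L ∧ Overlapping L}.ncard := by
  have himage : {σ | IsPermOf n σ ∧ IsPopStacked n σ} =
      ballotWord '' {L | IsBallot (Finset.Icc 1 n) L ∧ Overlapping L} := by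
    ext σ
    constructor
    · rintro ⟨-, hσ⟩
      obtain ⟨L, hL, hover, rfl⟩ := hσ.exists_overlapping
      exact ⟨L, ⟨hL, hover⟩, rfl⟩
    · rintro ⟨L, ⟨hL, hover⟩, rfl⟩
      exact ⟨(isBallot_Icc_iff.1 hL).2, isPopStacked_ballotWord hL hover⟩
  have hinj : Set.InjOn ballotWord {L | IsBallot (Finset.Icc 1 n) L ∧ Overlapping L} := by
    intro L hL M hM h
    have hsort : L.map (fun B => B.sort) = M.map fun B => B.sort := by
      rw [← splitBy_ballotWord hL.1.1 hL.2, h, splitBy_ballotWord hM.1.1 hM.2]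
    refine (List.map_injective_iff.2 ?_) hsort
    exact Function.LeftInverse.injective (g := List.toFinset) fun B => B.sort_toFinset _
  rw [← hinj.ncard_image, ← himage]
  rfl

/-! ## Counting overlapping ballots -/

section Counting

open Finset

/-- The number of elements of `U` below `y`, i.e. the position of `y` relative to `U`. -/
def rankIn (U : Finset ℕ) (y : ℕ) : ℕ := #{x ∈ U | x < y}

theorem rankIn_lt_rankIn_iff {U : Finset ℕ} {x y : ℕ} (hx : x ∈ U) :
    rankIn U x < rankIn U y ↔ x < y := by
  refine ⟨fun h => ?_, fun h => card_lt_card ?_⟩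
  · by_contra! hyx
    exact h.not_ge (card_le_card (monotone_filter_right U fun _ _ hz => hz.trans_le hyx))
  · rw [ssubset_iff_of_subset (monotone_filter_right U fun _ _ hz => hz.trans h)]
    exact ⟨x, by simp [hx, h], by simp⟩

theorem rankIn_eq_card {U : Finset ℕ} {y : ℕ} (h : ∀ x ∈ U, x < y) : rankIn U y = #U := by
  rw [rankIn, filter_true_of_mem h]

theorem rankIn_insert_of_le {U : Finset ℕ} {x y : ℕ} (h : y ≤ x) :
    rankIn (insert x U) y = rankIn U y := by
  rw [rankIn, filter_insert, if_neg h.not_gt, rankIn]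

theorem rankIn_sdiff_bmin (U B : Finset ℕ) : rankIn (U \ B) (bmin B) = rankIn U (bmin B) := by
  unfold rankIn
  congr 1
  ext x
  have : x ∈ B → bmin B ≤ x := bmin_le
  grind

theorem rankIn_bmax {U B : Finset ℕ} (hBU : B ⊆ U) (hB : B.Nonempty) :
    rankIn U (bmax B) = rankIn (U \ B) (bmax B) + (#B - 1) := by
  have hdisj : Disjoint {x ∈ U \ B | x < bmax B} (B.erase (bmax B)) :=
    disjoint_left.2 fun x hx hx' => (mem_sdiff.1 (mem_filter.1 hx).1).2 (mem_of_mem_erase hx')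
  rw [← card_erase_of_mem (bmax_mem hB), rankIn, rankIn, ← card_union_of_disjoint hdisj]
  congr 1
  ext x
  have : x ∈ B → x ≤ bmax B := le_bmax
  grind

theorem sum_nonempty_powerset_insert {α M : Type*} [DecidableEq α] [AddCommMonoid M]
    {x : α} {U : Finset α} (hx : x ∉ U) (f : Finset α → M) :
    ∑ B ∈ (insert x U).powerset with B.Nonempty, f B =
      ∑ B ∈ U.powerset with B.Nonempty, f B +
        (f {x} + ∑ B ∈ U.powerset with B.Nonempty, f (insert x B)) := by
  have herase : {B ∈ U.powerset | B.Nonempty} = U.powerset.erase ∅ := by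
    ext B
    simp [nonempty_iff_ne_empty, and_comm]
  rw [sum_filter, sum_powerset_insert hx, ← sum_filter]
  simp only [insert_nonempty, if_true]
  rw [herase, ← add_sum_erase _ (fun B => f (insert x B)) (empty_mem_powerset U), insert_empty]

/-- A nonempty subset `B` of an `n`-element set of numbers is described by the
numbers `a` and `b` of elements of its complement below `min B` and below `max B` and by the size
`m` of its complement. This is the sum of `H a b m` over all such `B`: the `b - a` complement
elements between `min B` and `max B` are distributed among the `n - 1 - m` gaps between
consecutive elements of `B`, which can be done in `(n - 1 - m).multichoose (b - a)` ways. -/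
def gapSum (n : ℕ) (H : ℕ → ℕ → ℕ → ℕ) : ℕ :=
  ∑ m ∈ range n, ∑ b ∈ range (m + 1), ∑ a ∈ range (b + 1),
    (n - 1 - m).multichoose (b - a) * H a b m

theorem sum_Ico_multichoose_sub {m a : ℕ} (ha : a ≤ m) (k : ℕ) :
    ∑ b ∈ Ico a (m + 1), k.multichoose (b - a) = (k + 1).multichoose (m - a) := by
  rw [sum_Ico_eq_sum_range, Nat.sub_add_comm ha]
  simp only [Nat.add_sub_cancel_left]
  rw [Nat.sum_range_multichoose, Nat.multichoose_eq, Nat.add_right_comm, Nat.add_sub_cancel,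
    Nat.add_comm, Nat.choose_symm_add]

theorem gapSum_succ (n : ℕ) (H : ℕ → ℕ → ℕ → ℕ) :
    gapSum (n + 1) H =
      gapSum n (fun a b m => H a b (m + 1)) + (H n n n + gapSum n (fun a _ m => H a m m)) := by
  have hfirst : ∑ m ∈ range (n + 1), ∑ b ∈ range m, ∑ a ∈ range (b + 1),
      (n - m).multichoose (b - a) * H a b m = gapSum n (fun a b m => H a b (m + 1)) := by
    rw [sum_range_succ', gapSum]
    simp only [range_zero, sum_empty, add_zero, Nat.sub_sub, Nat.add_comm 1]
  have htop : ∑ a ∈ range (n + 1), (n - n).multichoose (n - a) * H a n n = H n n n := by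
    rw [sum_range_succ, sum_eq_zero fun a ha => ?_]
    · simp
    · obtain ⟨d, hd⟩ := Nat.exists_eq_add_of_lt (mem_range.1 ha)
      rw [Nat.sub_self, show n - a = d + 1 by omega, Nat.multichoose_zero_succ, zero_mul]
  have hlast (m : ℕ) (hm : m ∈ range n) :
      ∑ a ∈ range (m + 1), (n - m).multichoose (m - a) * H a m m =
        ∑ b ∈ range (m + 1), ∑ a ∈ range (b + 1),
          (n - 1 - m).multichoose (b - a) * H a m m := by
    simp only [range_eq_Ico]
    rw [← sum_Ico_Ico_comm]
    refine sum_congr rfl fun a ha => ?_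
    rw [← sum_mul, sum_Ico_multichoose_sub (Nat.lt_succ_iff.1 (mem_Ico.1 ha).2)]
    have := mem_range.1 hm
    rw [show n - 1 - m + 1 = n - m by omega]
  rw [gapSum, sum_congr rfl fun m _ => sum_range_succ _ m, sum_add_distrib, Nat.add_sub_cancel,
    hfirst, sum_range_succ _ n, htop, sum_congr rfl hlast, add_comm (H n n n)]
  rfl

theorem sum_nonempty_powerset_eq_gapSum (U : Finset ℕ) (H : ℕ → ℕ → ℕ → ℕ) :
    ∑ B ∈ U.powerset with B.Nonempty,
        H (rankIn (U \ B) (bmin B)) (rankIn (U \ B) (bmax B)) #(U \ B) = gapSum #U H := by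
  induction U using Finset.induction_on_max generalizing H with
  | empty => simp [gapSum]
  | insert x U hlt ih =>
    have hx : x ∉ U := fun h => (hlt x h).false
    rw [sum_nonempty_powerset_insert hx, card_insert_of_notMem hx, gapSum_succ]
    congr 1
    · rw [← ih]
      refine sum_congr rfl fun B hB => ?_
      obtain ⟨hBU, hne⟩ := mem_filter.1 hB
      rw [mem_powerset] at hBU
      have hxB : x ∉ B := fun h => hx (hBU h)
      rw [insert_sdiff_of_notMem _ hxB, card_insert_of_notMem (by grind),
        rankIn_insert_of_le (hlt _ (hBU (bmin_mem hne))).le,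
        rankIn_insert_of_le (hlt _ (hBU (bmax_mem hne))).le]
    congr 1
    · rw [insert_sdiff_of_mem _ (mem_singleton_self x), sdiff_singleton_eq_erase,
        erase_eq_of_notMem hx, bmin_singleton, bmax_singleton, rankIn_eq_card hlt]
    · rw [← ih]
      refine sum_congr rfl fun B hB => ?_
      obtain ⟨hBU, hne⟩ := mem_filter.1 hB
      rw [mem_powerset] at hBU
      rw [insert_sdiff_insert, sdiff_insert_of_notMem hx,
        bmin_insert_of_forall_lt (fun y hy => hlt y (hBU hy)) hne,
        bmax_insert_of_forall_lt (fun y hy => hlt y (hBU hy)),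
        rankIn_eq_card fun y hy => hlt y (sdiff_subset hy)]

/-- The overlapping continuations of the block `P`: the ballots `L` of `U` for which `P :: L` is
overlapping. The recursion is on a bound `N` for the size of `U`. -/
noncomputable def followers : ℕ → Finset ℕ → Finset ℕ → Finset (List (Finset ℕ))
  | 0, _, _ => {[]}
  | N + 1, P, U =>
    if U = ∅ then {[]} else
      {B ∈ {B ∈ U.powerset | B.Nonempty} | bmin B < bmax P ∧ bmin P < bmax B}.biUnion fun B =>
        (followers N B (U \ B)).map ⟨List.cons B, List.cons_injective⟩

theorem mem_followers_empty {N : ℕ} {P : Finset ℕ} {L : List (Finset ℕ)} :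
    L ∈ followers N P ∅ ↔ IsBallot ∅ L ∧ Overlapping (P :: L) := by
  have hnil : followers N P ∅ = {[]} := by cases N <;> simp [followers]
  rw [hnil, mem_singleton]
  cases L with
  | nil => simp [isBallot_nil, overlapping_singleton]
  | cons B L =>
    refine iff_of_false (List.cons_ne_nil B L) fun h => ?_
    obtain ⟨hB, hBU, -⟩ := isBallot_cons.1 h.1
    exact hB.ne_empty (subset_empty.1 hBU)

theorem card_sdiff_le_of_card_le_succ {U B : Finset ℕ} {N : ℕ} (hU : #U ≤ N + 1) (hBU : B ⊆ U)
    (hB : B.Nonempty) : #(U \ B) ≤ N :=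
  Nat.le_of_lt_succ ((card_lt_card (sdiff_ssubset hBU hB)).trans_le hU)

theorem mem_followers {N : ℕ} {P U : Finset ℕ} {L : List (Finset ℕ)} (hU : #U ≤ N) :
    L ∈ followers N P U ↔ IsBallot U L ∧ Overlapping (P :: L) := by
  induction N generalizing P U L with
  | zero =>
    obtain rfl := card_eq_zero.1 (Nat.le_zero.1 hU)
    exact mem_followers_empty
  | succ N ih =>
    rcases U.eq_empty_or_nonempty with rfl | hne
    · exact mem_followers_empty
    · cases L with
      | nil => simp [followers, isBallot_nil, hne.ne_empty]
      | cons B L =>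
        have hrec (hBU : B ⊆ U) (hB : B.Nonempty) :=
          ih (P := B) (L := L) (card_sdiff_le_of_card_le_succ hU hBU hB)
        simp only [followers, if_neg hne.ne_empty, mem_biUnion, mem_filter, mem_powerset, mem_map,
          Function.Embedding.coeFn_mk, List.cons.injEq, isBallot_cons, overlapping_cons_cons]
        grind

theorem card_followers_succ {P U : Finset ℕ} (hU : U.Nonempty) (N : ℕ) :
    #(followers (N + 1) P U) = ∑ B ∈ U.powerset with B.Nonempty,
      if bmin B < bmax P ∧ bmin P < bmax B then #(followers N B (U \ B)) else 0 := by
  rw [followers, if_neg hU.ne_empty, card_biUnion, sum_filter]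
  · simp only [card_map]
  · intro B _ C _ hBC
    simp only [disjoint_left, mem_map]
    rintro _ ⟨L, _, rfl⟩ ⟨M, _, hM⟩
    exact hBC (List.cons.inj hM).1.symm

/-- The number of overlapping continuations of a block whose minimum and maximum exceed exactly `i`
and `j` of the `n` numbers still to be used. The recursion is on a bound for `n`; multiset
coefficients are written as binomials and the sum over `m` is innermost to keep the kernel
evaluation cheap. -/
def followCount : ℕ → ℕ → ℕ → ℕ → ℕ
  | 0, _, _, _ => 1
  | N + 1, n, i, j =>
    if n ≤ N then followCount N n i j else
      ∑ b ∈ range (N + 1), ∑ a ∈ range (min (b + 1) j), ∑ m ∈ Ico b (N + 1),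
        if i ≤ b + (N - m) then (N - m + (b - a) - 1).choose (b - a) * followCount N m a b else 0

theorem followCount_succ_self (N i j : ℕ) :
    followCount (N + 1) (N + 1) i j = gapSum (N + 1) fun a b m =>
      if a < j ∧ i ≤ b + (N - m) then followCount N m a b else 0 := by
  have hrange (b : ℕ) : range (min (b + 1) j) = {a ∈ range (b + 1) | a < j} := by grind
  rw [followCount, if_neg (Nat.not_succ_le_self N), gapSum]
  simp only [hrange, sum_filter, range_eq_Ico]
  symm
  rw [← sum_Ico_Ico_comm]
  refine sum_congr rfl fun b _ => ?_
  rw [sum_comm]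
  simp only [Nat.add_sub_cancel, Nat.multichoose_eq, mul_ite, mul_zero, ite_and,
    sum_ite_irrel, sum_const_zero]

theorem card_followers {N : ℕ} {P U : Finset ℕ} (hU : #U ≤ N) (hPU : Disjoint P U)
    (hP : P.Nonempty) :
    #(followers N P U) = followCount N #U (rankIn U (bmin P)) (rankIn U (bmax P)) := by
  induction N generalizing P U with
  | zero => rfl
  | succ N ih =>
    rcases hU.lt_or_eq with hlt | hcard
    · have hle := Nat.le_of_lt_succ hlt
      rw [followCount, if_pos hle, ← ih hle hPU hP]
      congr 1
      ext L
      rw [mem_followers hU, mem_followers hle]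
    have hne : U.Nonempty := card_pos.1 (hcard ▸ N.succ_pos)
    rw [card_followers_succ hne, hcard, followCount_succ_self, ← hcard,
      ← sum_nonempty_powerset_eq_gapSum]
    refine sum_congr rfl fun B hB => ?_
    obtain ⟨hBU, hB⟩ := mem_filter.1 hB
    rw [mem_powerset] at hBU
    have hmin : rankIn (U \ B) (bmin B) < rankIn U (bmax P) ↔ bmin B < bmax P := by
      rw [rankIn_sdiff_bmin, rankIn_lt_rankIn_iff (hBU (bmin_mem hB))]
    have hmax : rankIn U (bmin P) ≤ rankIn (U \ B) (bmax B) + (N - #(U \ B)) ↔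
        bmin P < bmax B := by
      have hcardB : N - #(U \ B) = #B - 1 := by
        have := card_sdiff_add_card_eq_card hBU
        omega
      have hmem := hBU (bmax_mem hB)
      rw [hcardB, ← rankIn_bmax hBU hB, ← not_lt, rankIn_lt_rankIn_iff hmem, not_lt]
      exact (disjoint_iff_ne.1 hPU _ (bmin_mem hP) _ hmem).le_iff_lt
    simp only [ih (card_sdiff_le_of_card_le_succ hU hBU hB) disjoint_sdiff hB, hmin, hmax]

theorem overlapping_cons_zero_last_iff {n : ℕ} {L : List (Finset ℕ)}
    (hL : IsBallot (Icc 1 n) L) : Overlapping ({0, n + 1} :: L) ↔ Overlapping L := by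
  cases L with
  | nil => exact iff_of_true (overlapping_singleton _) List.isChain_nil
  | cons B L =>
    obtain ⟨hB, hBU, -⟩ := isBallot_cons.1 hL
    have hBmin := mem_Icc.1 (hBU (bmin_mem hB))
    have hBmax := mem_Icc.1 (hBU (bmax_mem hB))
    rw [overlapping_cons_cons, bmin_pair (Nat.zero_le _), bmax_pair (Nat.zero_le _), and_iff_right]
    omega

theorem ncard_overlapping_ballots {n N : ℕ} (h : n ≤ N) :
    {L | IsBallot (Icc 1 n) L ∧ Overlapping L}.ncard = followCount N n 0 n := by
  have hcard : #(Icc 1 n) = n := by simp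
  have hfollowers : {L | IsBallot (Icc 1 n) L ∧ Overlapping L} =
      (followers N {0, n + 1} (Icc 1 n) : Set (List (Finset ℕ))) := by
    ext L
    rw [mem_coe, mem_followers (hcard.trans_le h)]
    exact and_congr_right fun hL => (overlapping_cons_zero_last_iff hL).symm
  have hzero : rankIn (Icc 1 n) 0 = 0 := by simp [rankIn]
  rw [hfollowers, Set.ncard_coe_finset, card_followers (hcard.trans_le h) (by simp) (by simp),
    bmin_pair (Nat.zero_le _), bmax_pair (Nat.zero_le _), hzero,
    rankIn_eq_card fun x hx => Nat.lt_succ_of_le (mem_Icc.1 hx).2, hcard]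

theorem popCount_eq_followCount {n N : ℕ} (h : n ≤ N) : popCount n = followCount N n 0 n :=
  (popCount_eq_ncard n).trans (ncard_overlapping_ballots h)

end Counting

/-- the number of pop-stacked permutations of lengths 1 through 10. -/
theorem statement9 :
    popCount 1 = 1 ∧ popCount 2 = 1 ∧ popCount 3 = 3 ∧ popCount 4 = 11 ∧
    popCount 5 = 49 ∧ popCount 6 = 263 ∧ popCount 7 = 1653 ∧ popCount 8 = 11877 ∧
    popCount 9 = 95991 ∧ popCount 10 = 862047 := by
  simp (disch := decide) only [popCount_eq_followCount (N := 10)]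
  decide +kernel
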